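/- In any Lengyel transfer game L(b;x₁,y₁;x₂,y₂): for every position (x,y) ∈ ℕ×ℕ, if y mod 2b < b then SG(x,y) ≠ 3, and if y mod 2b ≥ b then SG(x,y) ≠ 2. -/

import Mathlib

/-- The minimum excludant of a set of naturals: the least natural number not in the set. -/
noncomputable def mex (S : Set ℕ) : ℕ := sInf {n : ℕ | n ∉ S}

/-- `SG` is the Sprague–Grundy function of the Lengyel transfer game `L(b; x₁,y₁; x₂,y₂)`:
from `(x,y)` one may move to `(x, y−b)` (when `y ≥ b`), to `(x−x₁, y+y₁)` (when `x ≥ x₁`),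
or to `(x−x₂, y+y₂)` (when `x ≥ x₂`), and `SG` satisfies the mex recurrence. -/
def IsLengyelSG (b x1 y1 x2 y2 : ℕ) (SG : ℕ → ℕ → ℕ) : Prop :=
  ∀ x y : ℕ, SG x y = mex
    ((if b ≤ y then ({SG x (y - b)} : Set ℕ) else ∅) ∪
     (if x1 ≤ x then ({SG (x - x1) (y + y1)} : Set ℕ) else ∅) ∪
     (if x2 ≤ x then ({SG (x - x2) (y + y2)} : Set ℕ) else ∅))

/-!
Raising `y` by `b` changes every Grundy value `g` into its nim-sum `g ⊕ 1`. Inductively, passing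
from `(x, y)` to `(x, y + b)` applies `⊕ 1` to the values of all transfer options and makes `(x, y)`
itself an option. A value `m ≠ g` below `g ⊕ 1` lies in an earlier pair `{2k, 2k + 1}` than `g`, so
`m ⊕ 1 < g` is already the value of an option of `(x, y)`; that option is a transfer, because the
value of `(x, y - b)` is `g ⊕ 1`. Hence each column is `2b`-periodic in `y`. Below `b` only
transfers are available, so there the Grundy value is at most the number of transfers.
-/

section Mex

variable {S T : Set ℕ} {m n : ℕ}

theorem mex_notMem (hS : S.Finite) : mex S ∉ S :=
  Nat.sInf_mem hS.infinite_compl.nonempty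

theorem mem_of_lt_mex (h : m < mex S) : m ∈ S :=
  not_not.mp (Nat.notMem_of_lt_sInf h)

theorem mex_eq_of_notMem_of_forall_lt (hn : n ∉ S) (h : ∀ m < n, m ∈ S) : mex S = n :=
  IsLeast.csInf_eq ⟨hn, fun m hm => not_lt.mp fun hlt => hm (h m hlt)⟩

theorem mex_le_ncard (hS : S.Finite) : mex S ≤ S.ncard := by
  have hsub : (Finset.range (mex S) : Set ℕ) ⊆ S := fun m hm =>
    mem_of_lt_mex (Finset.mem_range.mp hm)
  simpa only [Set.ncard_coe_finset, Finset.card_range] using Set.ncard_le_ncard hsub hS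

theorem xor_one_lt_of_lt_xor_one (h : m < n ^^^ 1) (hne : m ≠ n) : m ^^^ 1 < n := by
  rcases Nat.even_or_odd n with hn | hn <;> rcases Nat.even_or_odd m with hm | hm <;>
    simp only [Nat.xor_one_of_even, Nat.xor_one_of_odd, hn, hm] at h ⊢ <;>
    grind

theorem mex_insert_image_xor_one (hS : S.Finite) (hT : T ⊆ {mex (T ∪ S) ^^^ 1}) :
    mex (insert (mex (T ∪ S)) ((· ^^^ 1) '' S)) = mex (T ∪ S) ^^^ 1 := by
  have hTS : (T ∪ S).Finite := ((Set.finite_singleton _).subset hT).union hS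
  set g := mex (T ∪ S)
  have hne : g ^^^ 1 ≠ g := by simp
  refine mex_eq_of_notMem_of_forall_lt ?_ fun m hm => ?_
  · rintro (hg | ⟨s, hs, hsg⟩)
    · exact hne hg
    · obtain rfl : s = g := Nat.xor_left_injective hsg
      exact mex_notMem hTS (Or.inr hs)
  · by_cases hmg : m = g
    · exact Or.inl hmg
    · have hmem : m ^^^ 1 ∈ T ∪ S := mem_of_lt_mex (xor_one_lt_of_lt_xor_one hm hmg)
      have hnotMem : m ^^^ 1 ∉ T := fun h => hmg (Nat.xor_left_injective (hT h))
      exact Or.inr ⟨m ^^^ 1, hmem.resolve_left hnotMem, Nat.xor_xor_cancel_right m 1⟩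

end Mex

section Game

variable {ι : Type*} {b : ℕ} {dx dy : ι → ℕ} {SG : ℕ → ℕ → ℕ} {x y : ℕ}

/-- The values that `SG` takes at the positions reached from `(x, y)` by one of the transfers
`(x, y) ↦ (x - dx i, y + dy i)`. -/
def transferValues (dx dy : ι → ℕ) (SG : ℕ → ℕ → ℕ) (x y : ℕ) : Set ℕ :=
  {g | ∃ i, dx i ≤ x ∧ SG (x - dx i) (y + dy i) = g}

/-- `SG` is the Sprague–Grundy function of the Lengyel transfer game with an arbitrary family of
transfers `(x, y) ↦ (x - dx i, y + dy i)` besides the subtraction `(x, y) ↦ (x, y - b)`. -/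
def IsTransferSG (b : ℕ) (dx dy : ι → ℕ) (SG : ℕ → ℕ → ℕ) : Prop :=
  ∀ x y, SG x y = mex ({g | b ≤ y ∧ SG x (y - b) = g} ∪ transferValues dx dy SG x y)

theorem transferValues_subset_range :
    transferValues dx dy SG x y ⊆ Set.range fun i => SG (x - dx i) (y + dy i) := by
  rintro g ⟨i, -, hg⟩
  exact ⟨i, hg⟩

theorem finite_transferValues [Finite ι] : (transferValues dx dy SG x y).Finite :=
  (Set.finite_range _).subset transferValues_subset_range

theorem ncard_transferValues_le [Finite ι] : (transferValues dx dy SG x y).ncard ≤ Nat.card ι :=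
  calc (transferValues dx dy SG x y).ncard
    _ ≤ (Set.range fun i => SG (x - dx i) (y + dy i)).ncard :=
      Set.ncard_le_ncard transferValues_subset_range (Set.finite_range _)
    _ ≤ Nat.card ι := Finite.card_range_le _

theorem transferValues_add_eq_image_xor_one (hdx : ∀ i, 0 < dx i)
    (h : ∀ x' < x, ∀ y', SG x' (y' + b) = SG x' y' ^^^ 1) :
    transferValues dx dy SG x (y + b) = (· ^^^ 1) '' transferValues dx dy SG x y := by
  have hstep (i : ι) (hi : dx i ≤ x) :
      SG (x - dx i) (y + b + dy i) = SG (x - dx i) (y + dy i) ^^^ 1 := by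
    rw [add_right_comm]
    exact h _ (Nat.sub_lt_self (hdx i) hi) _
  ext g
  constructor
  · rintro ⟨i, hi, rfl⟩
    exact ⟨_, ⟨i, hi, rfl⟩, (hstep i hi).symm⟩
  · rintro ⟨_, ⟨i, hi, rfl⟩, rfl⟩
    exact ⟨i, hi, hstep i hi⟩

namespace IsTransferSG

variable [Finite ι]

theorem le_card_of_lt (hSG : IsTransferSG b dx dy SG) (hy : y < b) : SG x y ≤ Nat.card ι := by
  have hdown : {g | b ≤ y ∧ SG x (y - b) = g} = ∅ := by
    simp only [hy.not_ge, false_and, Set.ofPred_false]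
  rw [hSG, hdown, Set.empty_union]
  exact (mex_le_ncard finite_transferValues).trans ncard_transferValues_le

theorem add_eq_xor_one (hSG : IsTransferSG b dx dy SG) (hb : 0 < b) (hdx : ∀ i, 0 < dx i)
    (x y : ℕ) : SG x (y + b) = SG x y ^^^ 1 := by
  induction x using Nat.strong_induction_on generalizing y with
  | _ x ihx =>
  induction y using Nat.strong_induction_on with
  | _ y ihy =>
  have hdown : {g | b ≤ y + b ∧ SG x (y + b - b) = g} = {SG x y} := by
    simp only [Nat.le_add_left, Nat.add_sub_cancel, true_and, Set.ofPred_eq_eq_singleton']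
  have hbelow : {g | b ≤ y ∧ SG x (y - b) = g} ⊆ {SG x y ^^^ 1} := by
    rintro g ⟨hy, rfl⟩
    have hpair := ihy (y - b) (Nat.sub_lt_self hb hy)
    rw [Nat.sub_add_cancel hy] at hpair
    rw [Set.mem_singleton_iff, hpair, Nat.xor_xor_cancel_right]
  rw [hSG x y] at hbelow
  rw [hSG x (y + b), hdown, transferValues_add_eq_image_xor_one hdx ihx, Set.singleton_union,
    hSG x y, mex_insert_image_xor_one finite_transferValues hbelow]

theorem periodic (hSG : IsTransferSG b dx dy SG) (hb : 0 < b) (hdx : ∀ i, 0 < dx i) (x : ℕ) :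
    Function.Periodic (SG x) (2 * b) := fun y => by
  rw [two_mul, ← add_assoc, hSG.add_eq_xor_one hb hdx, hSG.add_eq_xor_one hb hdx,
    Nat.xor_xor_cancel_right]

end IsTransferSG

theorem IsLengyelSG.isTransferSG {x1 x2 y1 y2 : ℕ} (hSG : IsLengyelSG b x1 y1 x2 y2 SG) :
    IsTransferSG b ![x1, x2] ![y1, y2] SG := by
  intro x y
  rw [hSG x y]
  congr 1
  ext g
  simp only [transferValues, Set.mem_union, Set.mem_ite_empty_right, Set.mem_singleton_iff,
    Set.mem_ofPred_eq, Fin.exists_fin_two, Matrix.cons_val_zero, Matrix.cons_val_one, or_assoc,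
    eq_comm (a := g)]

end Game

theorem twos_vs_threes_general {ι : Type*} [Finite ι] {b : ℕ} {dx dy : ι → ℕ} {SG : ℕ → ℕ → ℕ}
    (hb : 0 < b) (hdx : ∀ i, 0 < dx i) (hSG : IsTransferSG b dx dy SG) (x y : ℕ) :
    (y % (2 * b) < b → SG x y ≤ Nat.card ι) ∧
      (b ≤ y % (2 * b) → SG x y ^^^ 1 ≤ Nat.card ι) := by
  rw [← (hSG.periodic hb hdx x).map_mod_nat y]
  have hlt : y % (2 * b) < 2 * b := Nat.mod_lt y (by positivity)
  refine ⟨hSG.le_card_of_lt, fun hle => ?_⟩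
  have hpair := hSG.add_eq_xor_one hb hdx x (y % (2 * b) - b)
  rw [Nat.sub_add_cancel hle] at hpair
  rw [hpair, Nat.xor_xor_cancel_right]
  exact hSG.le_card_of_lt (by lia)

/-- In any Lengyel transfer game: positions with `y mod 2b < b` never have value `3`,
and positions with `y mod 2b ≥ b` never have value `2`. -/
theorem twos_vs_threes (b x1 x2 y1 y2 : ℕ) (hb : 0 < b) (hx1 : 0 < x1) (hx2 : 0 < x2)
    (SG : ℕ → ℕ → ℕ) (hSG : IsLengyelSG b x1 y1 x2 y2 SG) :
    ∀ x y : ℕ, (y % (2 * b) < b → SG x y ≠ 3) ∧ (b ≤ y % (2 * b) → SG x y ≠ 2) := by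
  intro x y
  have h := twos_vs_threes_general hb (by simp [hx1, hx2]) hSG.isTransferSG x y
  rw [Nat.card_fin] at h
  exact ⟨fun hy h3 => by simpa [h3] using h.1 hy, fun hy h2 => by simpa [h2] using h.2 hy⟩
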